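/- For all real numbers u, v with 0 < v ≤ u ≤ 1 and all τ ∈ [0,1], |u^τ − v^τ − τ·(u − v)| ≤ τ·(1−τ)·((u^{τ−2}/2)·(1−u)² + (v^{τ−2}/2)·(1−v)²). -/

import Mathlib

theorem rpow_taylor_aux (τ a : ℝ) (ha : 0 < a) (ha1 : a ≤ 1) (hτ0 : 0 ≤ τ) (hτ1 : τ ≤ 1) :
    1 - τ + τ * a - a ^ τ ≤ τ * (1 - τ) * (a ^ (τ - 2) / 2 * (1 - a) ^ 2) := by
  have hd : ∀ x : ℝ, 0 < x → HasDerivAt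
      (fun x : ℝ => τ * (1 - τ) * (x ^ (τ - 2) / 2 * (1 - x) ^ 2) - (1 - τ + τ * x - x ^ τ))
      (τ * (1 - τ) * (((τ - 2) * x ^ (τ - 2 - 1)) / 2 * (1 - x) ^ 2
        + x ^ (τ - 2) / 2 * (2 * (1 - x) * (-1))) - (τ - τ * x ^ (τ - 1))) x := by
    intro x hx
    have h1 := Real.hasDerivAt_rpow_const (x := x) (p := τ - 2) (Or.inl hx.ne')
    have h2 := Real.hasDerivAt_rpow_const (x := x) (p := τ) (Or.inl hx.ne')
    have h3 : HasDerivAt (fun x : ℝ => (1 - x) ^ 2) (2 * (1 - x) * (-1)) x := by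
      simpa using ((hasDerivAt_id x).const_sub 1).fun_pow 2
    have h4 : HasDerivAt (fun x : ℝ => 1 - τ + τ * x) τ x := by
      simpa using ((hasDerivAt_id x).const_mul τ).const_add (1 - τ)
    exact (((h1.div_const 2).mul h3).const_mul (τ * (1 - τ))).sub (h4.sub h2)
  have hanti := antitoneOn_of_deriv_nonpos (convex_Icc a 1)
    (fun x hx => (hd x (ha.trans_le hx.1)).continuousAt.continuousWithinAt)
    (fun x hx => by
      rw [interior_Icc] at hx
      exact (hd x (ha.trans hx.1)).differentiableAt.differentiableWithinAt)
    (fun x hx => by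
      rw [interior_Icc] at hx
      have hx0 : 0 < x := ha.trans hx.1
      rw [(hd x hx0).deriv]
      have hz : 0 < x ^ (τ - 2 - 1) := Real.rpow_pos_of_pos hx0 _
      have hy : 0 < x ^ (τ - 2) := Real.rpow_pos_of_pos hx0 _
      have hxy : x ^ (τ - 1) = x ^ (τ - 2) * x := by
        rw [← Real.rpow_add_one hx0.ne']; congr 1; ring
      have hyw : x ^ (τ - 2) * x ^ (2 - τ) = 1 := by
        rw [← Real.rpow_add hx0]; simp
      have hb := one_add_mul_self_le_rpow_one_add (s := x - 1) (by linarith)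
        (p := 2 - τ) (by linarith)
      rw [add_sub_cancel] at hb
      have hk := mul_le_mul_of_nonneg_left hb hy.le
      rw [hyw] at hk
      rw [hxy]
      have hk2 := mul_le_mul_of_nonneg_left hk hτ0
      have h5 : 0 ≤ τ * (1 - τ) * ((2 - τ) * x ^ (τ - 2 - 1) / 2 * (1 - x) ^ 2) := by
        have : 0 ≤ 1 - τ := by linarith
        have : 0 ≤ 2 - τ := by linarith
        positivity
      linarith)
  have := hanti (Set.left_mem_Icc.2 ha1) (Set.right_mem_Icc.2 ha1) ha1
  simp at this
  linarith

/-- Taylor-type estimate: for `0 < v ≤ u ≤ 1` and `τ ∈ [0,1]`,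
`|u^τ − v^τ − τ(u−v)| ≤ τ(1−τ)((u^{τ−2}/2)(1−u)² + (v^{τ−2}/2)(1−v)²)`. -/
theorem abs_rpow_sub_rpow_sub_le (u v τ : ℝ) (hv : 0 < v) (hvu : v ≤ u) (hu : u ≤ 1)
    (hτ0 : 0 ≤ τ) (hτ1 : τ ≤ 1) :
    |u ^ τ - v ^ τ - τ * (u - v)|
      ≤ τ * (1 - τ) * (u ^ (τ - 2) / 2 * (1 - u) ^ 2 + v ^ (τ - 2) / 2 * (1 - v) ^ 2) := by
  have hu0 : 0 < u := hv.trans_le hvu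
  have h1 := rpow_taylor_aux τ u hu0 hu hτ0 hτ1
  have h2 := rpow_taylor_aux τ v hv (hvu.trans hu) hτ0 hτ1
  have h3 := rpow_one_add_le_one_add_mul_self (s := u - 1) (by linarith) hτ0 hτ1
  have h4 := rpow_one_add_le_one_add_mul_self (s := v - 1) (by linarith) hτ0 hτ1
  rw [add_sub_cancel] at h3 h4
  rw [abs_le]
  constructor <;> linarith
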